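/- For every positive integer k there exists a number φ_k > 0 such that for every set of 2k distinct points t_1, …, t_{2k} ∈ S¹ lying on an arc of length at most φ_k, there exists a raked trigonometric polynomial A(t) = c + Σ_{j=1}^k a_j sin((2j−1)t) + Σ_{j=1}^k b_j cos((2j−1)t) such that for t ∈ S¹ one has A(t) = 0 if and only if t = t_j for some j ∈ {1, …, 2k}. -/

import Mathlib

open Real

/-- The symmetric moment curve `SM_{2k} : ℝ → ℝ^{2k}`,
`SM_{2k}(t) = (cos t, sin t, cos 3t, sin 3t, …, cos (2k-1)t, sin (2k-1)t)`. -/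
noncomputable def SM (k : ℕ) (t : ℝ) : EuclideanSpace ℝ (Fin (2 * k)) :=
  WithLp.toLp 2 fun i => if i.1 % 2 = 0 then Real.cos ((2 * (i.1 / 2) + 1) * t)
           else Real.sin ((2 * (i.1 / 2) + 1) * t)

/-- `B_{2k}`, the convex hull of the symmetric moment curve. -/
noncomputable def B (k : ℕ) : Set (EuclideanSpace ℝ (Fin (2 * k))) :=
  convexHull ℝ (Set.range (SM k))

/-- The length of the shorter arc between the points of `S¹ = ℝ/2πℤ`
represented by `s` and `t`. -/
noncomputable def arcDist (s t : ℝ) : ℝ :=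
  dist (s : AddCircle (2 * π)) (t : AddCircle (2 * π))

/-- The raked trigonometric polynomial of degree `2k-1` with constant term `c`
and coefficients `a j`, `b j` on `sin (2j-1)t`, `cos (2j-1)t`. -/
noncomputable def rakedTrig (k : ℕ) (c : ℝ) (a b : Fin k → ℝ) (t : ℝ) : ℝ :=
  c + (∑ j : Fin k, a j * Real.sin ((2 * (j : ℕ) + 1) * t))
    + (∑ j : Fin k, b j * Real.cos ((2 * (j : ℕ) + 1) * t))

/-!
The derivative of a raked trigonometric polynomial has only odd frequencies, so up to the factor
`exp (-i(2k-1)t)` it is a polynomial of degree at most `2k-1` in `exp (2it)`: it has at most `2k-1`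
zeros in a half-open half circle, and if it has that many, it is a constant times the product of the
`sin (t - τ)` over these zeros `τ`. Rolle's theorem then bounds by `2k` the number of zeros of a
raked polynomial `A` on a closed half circle.

A dimension count gives `A` vanishing at the `2k` given points. Half circles containing the short
arc `[c, c + φ]` cover everything but the opposite arc `[c + π, c + π + φ]`, so only there could `A`
have further zeros. Normalize `A' = ∏ sin (t - τ)`, where all `τ` lie in the short arc. From its
last zero up to `c + π` the function `A` increases, gaining more than `2^(1-2k)` on
`[c + π/3, c + 2π/3]`, where every factor is at least `1/2`; since `|A'| ≤ 1`, it cannot come back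
to `0` within the opposite arc if `φ ≤ 2^(1-2k)`.
-/

open Complex (I)
open Polynomial ComplexConjugate

lemma exists_finset_deriv_eq_zero {f : ℝ → ℝ} {a b y : ℝ} (hf : ContinuousOn f (Set.Icc a b))
    {n : ℕ} {Z : Finset ℝ} (hcard : Z.card = n + 1) (hZ : ↑Z ⊆ Set.Icc a b)
    (heq : ∀ z ∈ Z, f z = y) :
    ∃ T : Finset ℝ, T.card = n ∧ ↑T ⊆ Set.Ioo a b ∧ ∀ τ ∈ T, deriv f τ = 0 := by
  set u := Z.orderEmbOfFin hcard
  have hmem (i) : u i ∈ Z := Z.orderEmbOfFin_mem hcard i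
  have hrolle (i : Fin n) : ∃ τ ∈ Set.Ioo (u i.castSucc) (u i.succ), deriv f τ = 0 :=
    exists_deriv_eq_zero (u.strictMono i.castSucc_lt_succ)
      (hf.mono (Set.Icc_subset_Icc (hZ (hmem _)).1 (hZ (hmem _)).2))
      ((heq _ (hmem _)).trans (heq _ (hmem _)).symm)
  choose τ hτ hderiv using hrolle
  have hmono : StrictMono τ := fun i j hij =>
    (hτ i).2.trans ((u.monotone (Fin.succ_le_castSucc_iff.2 hij)).trans_lt (hτ j).1)
  refine ⟨Finset.univ.map ⟨τ, hmono.injective⟩, by simp, ?_, by simpa using hderiv⟩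
  rintro _ hx
  obtain ⟨i, rfl⟩ : ∃ i, τ i = _ := by simpa using hx
  exact ⟨(hZ (hmem _)).1.trans_lt (hτ i).1, (hτ i).2.trans_le (hZ (hmem _)).2⟩

lemma exp_sq_sub_exp_sq (z w : ℂ) :
    Complex.exp (z * I) ^ 2 - Complex.exp (w * I) ^ 2 =
      Complex.exp (z * I) * (Complex.exp (w * I) * (2 * I)) * Complex.sin (z - w) := by
  rw [Complex.sin, neg_sub, sub_mul, sub_mul, sub_mul, Complex.exp_sub,
    Complex.exp_sub]
  have hz := Complex.exp_ne_zero (z * I)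
  have hw := Complex.exp_ne_zero (w * I)
  generalize Complex.exp (z * I) = p at *
  generalize Complex.exp (w * I) = q at *
  field_simp
  linear_combination (p ^ 2 - q ^ 2) * Complex.I_sq

lemma injOn_exp_sq (x : ℝ) :
    Set.InjOn (fun t : ℝ => Complex.exp (t * I) ^ 2) (Set.Ico x (x + π)) := by
  intro s hs t ht hst
  have hsin : Real.sin (s - t) = 0 := by
    have h := exp_sq_sub_exp_sq s t
    rw [sub_eq_zero.2 hst, ← Complex.ofReal_sub, ← Complex.ofReal_sin] at h
    simpa only [mul_eq_zero, Complex.exp_ne_zero, Complex.I_ne_zero, two_ne_zero, false_or,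
      Complex.ofReal_eq_zero] using h.symm
  exact sub_eq_zero.1 ((Real.sin_eq_zero_iff_of_lt_of_lt (by linarith [hs.1, ht.2])
    (by linarith [hs.2, ht.1])).1 hsin)

lemma exists_eval_exp_sq_eq_mul_prod_sin {ι : Type*} {Q : ℂ[X]} {T : Finset ι} {τ : ι → ℂ}
    (hinj : Set.InjOn (fun i => Complex.exp (τ i * I) ^ 2) T) (hdeg : Q.natDegree ≤ T.card)
    (hroot : ∀ i ∈ T, Q.eval (Complex.exp (τ i * I) ^ 2) = 0) :
    ∃ D : ℂ, ∀ t : ℂ, Q.eval (Complex.exp (t * I) ^ 2) =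
      Complex.exp (t * I) ^ T.card * (D * ∏ i ∈ T, Complex.sin (t - τ i)) := by
  set M : ℂ[X] := ∏ i ∈ T, (X - C (Complex.exp (τ i * I) ^ 2)) with hM
  have hdvd : M ∣ Q := Finset.prod_dvd_of_coprime
    (fun i hi j hj hij => isCoprime_X_sub_C_of_isUnit_sub
      (sub_ne_zero.2 (hinj.ne hi hj hij)).isUnit)
    (fun i hi => dvd_iff_isRoot.2 (hroot i hi))
  have hQ : Q = C Q.leadingCoeff * M := eq_leadingCoeff_mul_of_monic_of_dvd_of_natDegree_le
    (monic_prod_X_sub_C _ _) hdvd (by rwa [hM, natDegree_finsetProd_X_sub_C_eq_card])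
  refine ⟨Q.leadingCoeff * ∏ i ∈ T, (Complex.exp (τ i * I) * (2 * I)), fun t => ?_⟩
  calc Q.eval (Complex.exp (t * I) ^ 2)
      = Q.leadingCoeff * ∏ i ∈ T, (Complex.exp (t * I) ^ 2 - Complex.exp (τ i * I) ^ 2) := by
        conv_lhs => rw [hQ]
        simp only [hM, eval_mul, eval_C, eval_prod, eval_sub, eval_X]
    _ = _ := by
        simp only [exp_sq_sub_exp_sq, Finset.prod_mul_distrib, Finset.prod_const]
        ring

section SelfInversive

/-- For `n ≥ deg R` and `R*(z) = zⁿ R̄(1/z)` this is `zⁿ⁺¹ R(z) + R*(z)`. Such self-inversive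
polynomials turn the zeros of a real trigonometric polynomial into roots on the unit circle. -/
noncomputable def selfInversive (n : ℕ) (R : ℂ[X]) : ℂ[X] :=
  X ^ (n + 1) * R + reflect n (R.map conj)

variable {n : ℕ} {R : ℂ[X]}

lemma natDegree_reflect_map_conj_le (hR : R.natDegree ≤ n) :
    (reflect n (R.map conj)).natDegree ≤ n :=
  natDegree_reflect_le.trans (max_le le_rfl (natDegree_map_le.trans hR))

lemma natDegree_selfInversive_le (hR : R.natDegree ≤ n) :
    (selfInversive n R).natDegree ≤ 2 * n + 1 := by
  refine natDegree_add_le_of_degree_le ?_ ((natDegree_reflect_map_conj_le hR).trans (by lia))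
  exact natDegree_mul_le_of_le (natDegree_X_pow_le _) hR |>.trans (by lia)

lemma selfInversive_ne_zero (hR : R.natDegree ≤ n) (hR0 : R ≠ 0) : selfInversive n R ≠ 0 := by
  intro h
  refine hR0 (Polynomial.ext fun j => ?_)
  have hcoeff := congrArg (coeff · (j + (n + 1))) h
  have hlow := natDegree_reflect_map_conj_le hR
  simpa [selfInversive, coeff_eq_zero_of_natDegree_lt (hlow.trans_lt (by lia : n < j + (n + 1)))]
    using hcoeff

lemma eval_reflect_map_conj (hR : R.natDegree ≤ n) {w : ℂ} (hw : ‖w‖ = 1) :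
    (reflect n (R.map conj)).eval w = w ^ n * conj (R.eval w) := by
  have hinv : w * conj w = 1 := by simp [Complex.mul_conj, Complex.normSq_eq_norm_sq, hw]
  let _ : Invertible (conj w) := ⟨w, hinv, by rw [mul_comm, hinv]⟩
  have h : (reflect n (R.map conj)).eval w * conj w ^ n = (R.map conj).eval (conj w) :=
    eval₂_reflect_mul_pow (RingHom.id ℂ) (conj w) n _ (natDegree_map_le.trans hR)
  rw [← eval_map_apply, ← h, mul_left_comm, ← mul_pow, hinv, one_pow, mul_one]

lemma eval_selfInversive_sq (hR : R.natDegree ≤ n) {z : ℂ} (hz : ‖z‖ = 1) :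
    (selfInversive n R).eval (z ^ 2) =
      z ^ (2 * n + 1) * (2 * (z * R.eval (z ^ 2)).re : ℝ) := by
  have hinv : z * conj z = 1 := by simp [Complex.mul_conj, Complex.normSq_eq_norm_sq, hz]
  rw [selfInversive, eval_add, eval_mul, eval_pow, eval_X,
    eval_reflect_map_conj hR (by simp [hz]), ← Complex.add_conj, map_mul]
  linear_combination (-z ^ (2 * n) * conj (R.eval (z ^ 2))) * hinv

end SelfInversive

section OddTrig

/-- The real trigonometric polynomial `t ↦ Re (∑ pⱼ exp (i(2j+1)t))`, where `P = ∑ pⱼ Xʲ`. Up to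
the constant term, these are the raked trigonometric polynomials. -/
noncomputable def oddTrig (P : ℂ[X]) (t : ℝ) : ℝ :=
  (Complex.exp (t * I) * P.eval (Complex.exp (t * I) ^ 2)).re

/-- The polynomial `∑ i(2j+1) pⱼ Xʲ`, whose associated `oddTrig` is the derivative of
that of `P = ∑ pⱼ Xʲ`. -/
noncomputable def oddTrigDeriv (P : ℂ[X]) : ℂ[X] :=
  C I * (P + 2 * (X * derivative P))

variable {n : ℕ} {P : ℂ[X]}

lemma oddTrig_periodic (P : ℂ[X]) : Function.Periodic (oddTrig P) (2 * π) := by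
  intro t
  have hexp : Complex.exp (↑(t + 2 * π) * I) = Complex.exp (t * I) := by
    push_cast
    rw [add_mul, Complex.exp_periodic]
  rw [oddTrig, hexp, oddTrig]

lemma hasDerivAt_oddTrig (P : ℂ[X]) (t : ℝ) :
    HasDerivAt (oddTrig P) (oddTrig (oddTrigDeriv P) t) t := by
  have hexp : HasDerivAt (fun z : ℂ => Complex.exp (z * I)) (Complex.exp (t * I) * I) t := by
    simpa using ((hasDerivAt_id (t : ℂ)).mul_const I).cexp
  have h := hexp.mul ((P.hasDerivAt (Complex.exp (t * I) ^ 2)).comp (t : ℂ) (hexp.pow 2))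
  refine h.real_of_complex.congr_deriv (congrArg Complex.re ?_)
  simp only [oddTrigDeriv, eval_mul, eval_C, eval_add, eval_X, eval_ofNat, Function.comp_apply,
    Pi.pow_apply]
  ring

lemma coeff_oddTrigDeriv (P : ℂ[X]) (j : ℕ) :
    (oddTrigDeriv P).coeff j = I * (2 * j + 1) * P.coeff j := by
  rw [oddTrigDeriv, coeff_C_mul, coeff_add, coeff_ofNat_mul]
  cases j with
  | zero => simp
  | succ j =>
    rw [coeff_X_mul, coeff_derivative]
    push_cast
    ring

lemma oddTrigDeriv_ne_zero (hP0 : P ≠ 0) : oddTrigDeriv P ≠ 0 := by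
  contrapose! hP0
  ext j
  have hj : (2 * (j : ℂ) + 1) ≠ 0 := by norm_cast
  have h := coeff_oddTrigDeriv P j
  simpa [hP0, hj] using h

lemma eval_selfInversive_exp_sq (hP : P.natDegree ≤ n) (t : ℝ) :
    (selfInversive n P).eval (Complex.exp (t * I) ^ 2) =
      Complex.exp (t * I) ^ (2 * n + 1) * (2 * oddTrig P t : ℝ) :=
  eval_selfInversive_sq hP (Complex.norm_exp_ofReal_mul_I t)

lemma card_le_of_oddTrig_eq_zero (hP : P.natDegree ≤ n) (hP0 : P ≠ 0) {T : Finset ℝ} {x : ℝ}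
    (hT : ↑T ⊆ Set.Ico x (x + π)) (hzero : ∀ τ ∈ T, oddTrig P τ = 0) : T.card ≤ 2 * n + 1 := by
  rw [← Finset.card_image_of_injOn ((injOn_exp_sq x).mono hT)]
  refine (card_le_degree_of_subset_roots fun z hz => ?_).trans (natDegree_selfInversive_le hP)
  obtain ⟨τ, hτ, rfl⟩ := Finset.mem_image.1 hz
  exact (mem_roots (selfInversive_ne_zero hP hP0)).2
    (by simp [IsRoot, eval_selfInversive_exp_sq hP, hzero τ hτ])

lemma exists_oddTrig_eq_mul_prod_sin (hP : P.natDegree ≤ n) (hP0 : P ≠ 0) {T : Finset ℝ} {x : ℝ}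
    (hcard : T.card = 2 * n + 1) (hT : ↑T ⊆ Set.Ico x (x + π))
    (hzero : ∀ τ ∈ T, oddTrig P τ = 0) :
    ∃ C ≠ 0, ∀ t, oddTrig P t = C * ∏ τ ∈ T, Real.sin (t - τ) := by
  obtain ⟨D, hD⟩ := exists_eval_exp_sq_eq_mul_prod_sin (τ := ((↑) : ℝ → ℂ))
    ((injOn_exp_sq x).mono hT) ((natDegree_selfInversive_le hP).trans_eq hcard.symm)
    (fun τ hτ => by simp [eval_selfInversive_exp_sq hP, hzero τ hτ])
  have hprod (t : ℝ) : oddTrig P t = D.re / 2 * ∏ τ ∈ T, Real.sin (t - τ) := by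
    have h := (eval_selfInversive_exp_sq hP t).symm.trans (hD t)
    rw [hcard] at h
    have h' := congrArg Complex.re
      (mul_left_cancel₀ (pow_ne_zero _ (Complex.exp_ne_zero _)) h)
    simp only [← Complex.ofReal_sub, ← Complex.ofReal_sin, ← Complex.ofReal_prod,
      Complex.re_mul_ofReal, Complex.ofReal_re] at h'
    linarith
  refine ⟨D.re / 2, fun hC => ?_, hprod⟩
  obtain ⟨S, hS, hScard⟩ := (Set.Ico_infinite (lt_add_of_pos_right x pi_pos)).exists_subset_card_eq
    (2 * n + 2)
  have := card_le_of_oddTrig_eq_zero hP hP0 hS fun τ _ => by rw [hprod, hC, zero_mul]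
  lia

lemma hasDerivAt_const_add_oddTrig (c : ℝ) (P : ℂ[X]) (t : ℝ) :
    HasDerivAt (fun t => c + oddTrig P t) (oddTrig (oddTrigDeriv P) t) t :=
  (hasDerivAt_oddTrig P t).const_add c

lemma continuous_const_add_oddTrig (c : ℝ) (P : ℂ[X]) : Continuous fun t => c + oddTrig P t :=
  continuous_iff_continuousAt.2 fun t => (hasDerivAt_const_add_oddTrig c P t).continuousAt

lemma natDegree_oddTrigDeriv_le (hP : P.natDegree ≤ n) : (oddTrigDeriv P).natDegree ≤ n :=
  natDegree_le_iff_coeff_eq_zero.2 fun j hj => by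
    rw [coeff_oddTrigDeriv, coeff_eq_zero_of_natDegree_lt (hP.trans_lt hj), mul_zero]

lemma card_le_of_const_add_oddTrig_eq_zero (hP : P.natDegree ≤ n) (hP0 : P ≠ 0) {c x : ℝ}
    {Z : Finset ℝ} (hZ : ↑Z ⊆ Set.Icc x (x + π)) (hzero : ∀ z ∈ Z, c + oddTrig P z = 0) :
    Z.card ≤ 2 * n + 2 := by
  by_contra! hlt
  obtain ⟨T, hTcard, hT, hderiv⟩ := exists_finset_deriv_eq_zero
    (continuous_const_add_oddTrig c P).continuousOn (n := Z.card - 1) (by lia) hZ hzero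
  have := card_le_of_oddTrig_eq_zero (natDegree_oddTrigDeriv_le hP) (oddTrigDeriv_ne_zero hP0)
    (hT.trans Set.Ioo_subset_Ico_self)
    fun τ hτ => (hasDerivAt_const_add_oddTrig c P τ).deriv ▸ hderiv τ hτ
  lia

end OddTrig

section OppositeArc

lemma half_le_sin {x : ℝ} (hx : x ∈ Set.Icc (π / 6) (5 * π / 6)) : 1 / 2 ≤ Real.sin x := by
  rw [← Real.cos_pi_div_two_sub, ← Real.cos_abs, ← Real.cos_pi_div_three]
  exact Real.cos_le_cos_of_nonneg_of_le_pi (abs_nonneg _) (by linarith [pi_pos])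
    (abs_le.2 ⟨by linarith [hx.2], by linarith [hx.1]⟩)

variable {F : ℝ → ℝ} {T : Finset ℝ}

lemma monotoneOn_of_hasDerivAt_prod_sin
    (hF : ∀ x, HasDerivAt F (∏ τ ∈ T, Real.sin (x - τ)) x) {c p : ℝ} (hT : ↑T ⊆ Set.Icc c p) :
    MonotoneOn F (Set.Icc p (c + π)) := by
  refine monotoneOn_of_hasDerivWithinAt_nonneg (convex_Icc _ _)
    (fun x _ => (hF x).continuousAt.continuousWithinAt) (fun x _ => (hF x).hasDerivWithinAt)
    fun x hx => Finset.prod_nonneg fun τ hτ => ?_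
  have hx := interior_subset hx
  exact Real.sin_nonneg_of_nonneg_of_le_pi (by linarith [hx.1, (hT hτ).2])
    (by linarith [hx.2, (hT hτ).1])

lemma sub_le_of_hasDerivAt_prod_sin
    (hF : ∀ x, HasDerivAt F (∏ τ ∈ T, Real.sin (x - τ)) x) {x y : ℝ} (hxy : x ≤ y) :
    F x - F y ≤ y - x := by
  have hbound (t : ℝ) : |∏ τ ∈ T, Real.sin (t - τ)| ≤ 1 := by
    rw [Finset.abs_prod]
    exact Finset.prod_le_one (fun _ _ => abs_nonneg _) fun _ _ => Real.abs_sin_le_one _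
  have h := convex_univ.mul_sub_le_image_sub_of_le_deriv (C := -1)
    (fun t _ => (hF t).continuousAt.continuousWithinAt)
    (fun t _ => (hF t).differentiableAt.differentiableWithinAt)
    (fun t _ => (hF t).deriv ▸ (abs_le.1 (hbound t)).1) x (Set.mem_univ _) y (Set.mem_univ _) hxy
  linarith

lemma mul_half_pow_card_le_sub_of_hasDerivAt_prod_sin
    (hF : ∀ x, HasDerivAt F (∏ τ ∈ T, Real.sin (x - τ)) x) {x y : ℝ} (hxy : x ≤ y)
    (hT : ↑T ⊆ Set.Icc (y - 5 * π / 6) (x - π / 6)) :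
    (1 / 2) ^ T.card * (y - x) ≤ F y - F x := by
  refine (convex_Icc x y).mul_sub_le_image_sub_of_le_deriv
    (fun t _ => (hF t).continuousAt.continuousWithinAt)
    (fun t _ => (hF t).differentiableAt.differentiableWithinAt)
    (fun t ht => ?_) x (Set.left_mem_Icc.2 hxy) y (Set.right_mem_Icc.2 hxy) hxy
  rw [(hF t).deriv, ← Finset.prod_const]
  have ht := interior_subset ht
  exact Finset.prod_le_prod (fun _ _ => by norm_num) fun τ hτ =>
    half_le_sin ⟨by linarith [ht.1, (hT hτ).2], by linarith [ht.2, (hT hτ).1]⟩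

lemma pos_of_hasDerivAt_prod_sin (hF : ∀ x, HasDerivAt F (∏ τ ∈ T, Real.sin (x - τ)) x)
    {c p φ s : ℝ} (hT : ↑T ⊆ Set.Icc c p) (hne : T.Nonempty) (hp : p ≤ c + φ)
    (hφ : φ ≤ (1 / 2) ^ T.card) (hFp : F p = 0) (hs : s ∈ Set.Icc (c + π) (c + π + φ)) :
    0 < F s := by
  have hpi := Real.pi_gt_three
  have hφ_le : φ ≤ 1 / 2 := hφ.trans (pow_le_of_le_one (by norm_num) (by norm_num) hne.card_ne_zero)
  have hmono := monotoneOn_of_hasDerivAt_prod_sin hF hT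
  have hbefore : F p ≤ F (c + π / 3) :=
    hmono ⟨le_rfl, by linarith⟩ ⟨by linarith, by linarith⟩ (by linarith)
  have hmiddle : (1 / 2) ^ T.card * (π / 3) ≤ F (c + 2 * π / 3) - F (c + π / 3) := by
    have h := mul_half_pow_card_le_sub_of_hasDerivAt_prod_sin hF (x := c + π / 3)
      (y := c + 2 * π / 3) (by linarith)
      (hT.trans (Set.Icc_subset_Icc (by linarith) (by linarith)))
    rwa [show c + 2 * π / 3 - (c + π / 3) = π / 3 by ring] at h
  have hafter : F (c + 2 * π / 3) ≤ F (c + π) :=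
    hmono ⟨by linarith, by linarith⟩ ⟨by linarith, le_rfl⟩ (by linarith)
  have hopposite : F (c + π) - F s ≤ φ :=
    (sub_le_of_hasDerivAt_prod_sin hF hs.1).trans (by linarith [hs.2])
  have hgain : φ < (1 / 2) ^ T.card * (π / 3) :=
    hφ.trans_lt (lt_mul_of_one_lt_right (by positivity) (by linarith))
  linarith

end OppositeArc

section ZeroSet

variable {n : ℕ} {P : ℂ[X]} {Z : Finset ℝ} {c₀ c φ : ℝ}

lemma const_add_oddTrig_ne_zero_of_opposite (hP : P.natDegree ≤ n) (hP0 : P ≠ 0)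
    (hcard : Z.card = 2 * n + 2) (hZ : ↑Z ⊆ Set.Icc c (c + φ)) (hφ : φ ≤ (1 / 2) ^ (2 * n + 1))
    (hzero : ∀ z ∈ Z, c₀ + oddTrig P z = 0) {s : ℝ} (hs : s ∈ Set.Icc (c + π) (c + π + φ)) :
    c₀ + oddTrig P s ≠ 0 := by
  have hne : Z.Nonempty := Finset.card_pos.1 (by lia)
  set p := Z.max' hne
  have hp := hZ (Z.max'_mem hne)
  obtain ⟨T, hTcard, hT, hderiv⟩ := exists_finset_deriv_eq_zero
    (continuous_const_add_oddTrig c₀ P).continuousOn hcard (b := p)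
    (fun z hz => ⟨(hZ hz).1, Z.le_max' z hz⟩) hzero
  have hTπ : ↑T ⊆ Set.Ico c (c + π) := fun τ hτ => ⟨(hT hτ).1.le, by
    have : φ ≤ 1 := hφ.trans (pow_le_one₀ (by norm_num) (by norm_num))
    linarith [(hT hτ).2, hp.2, Real.pi_gt_three]⟩
  obtain ⟨C, hC, hprod⟩ := exists_oddTrig_eq_mul_prod_sin (natDegree_oddTrigDeriv_le hP)
    (oddTrigDeriv_ne_zero hP0) hTcard hTπ
    fun τ hτ => (hasDerivAt_const_add_oddTrig c₀ P τ).deriv ▸ hderiv τ hτ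
  have hF (x : ℝ) : HasDerivAt (fun t => C⁻¹ * (c₀ + oddTrig P t)) (∏ τ ∈ T, Real.sin (x - τ)) x :=
    ((hasDerivAt_const_add_oddTrig c₀ P x).const_mul C⁻¹).congr_deriv
      (by rw [hprod, inv_mul_cancel_left₀ hC])
  have hpos := pos_of_hasDerivAt_prod_sin hF (hT.trans Set.Ioo_subset_Icc_self)
    (Finset.card_pos.1 (by lia)) hp.2 (hTcard ▸ hφ)
    (by rw [hzero p (Z.max'_mem hne), mul_zero]) hs
  exact right_ne_zero_of_mul hpos.ne'

lemma mem_of_const_add_oddTrig_eq_zero (hP : P.natDegree ≤ n) (hP0 : P ≠ 0)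
    (hcard : Z.card = 2 * n + 2) {x : ℝ} (hZ : ↑Z ⊆ Set.Icc x (x + π))
    (hzero : ∀ z ∈ Z, c₀ + oddTrig P z = 0) {s : ℝ} (hs : s ∈ Set.Icc x (x + π))
    (hs0 : c₀ + oddTrig P s = 0) : s ∈ Z := by
  by_contra hsZ
  have := card_le_of_const_add_oddTrig_eq_zero (Z := insert s Z) hP hP0
    (by simpa [Set.insert_subset_iff] using ⟨hs, hZ⟩) (by simpa using ⟨hs0, hzero⟩)
  rw [Finset.card_insert_of_notMem hsZ] at this
  lia

theorem const_add_oddTrig_eq_zero_iff_mem (hP : P.natDegree ≤ n) (hP0 : P ≠ 0)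
    (hcard : Z.card = 2 * n + 2) (hZ : ↑Z ⊆ Set.Icc c (c + φ)) (hφ : φ ≤ (1 / 2) ^ (2 * n + 1))
    (hzero : ∀ z ∈ Z, c₀ + oddTrig P z = 0) {s : ℝ}
    (hs : s ∈ Set.Ico (c + φ - π) (c + φ - π + 2 * π)) : c₀ + oddTrig P s = 0 ↔ s ∈ Z := by
  have hφπ : φ ≤ π := by
    have : φ ≤ 1 := hφ.trans (pow_le_one₀ (by norm_num) (by norm_num))
    linarith [Real.pi_gt_three]
  have hφ0 : 0 ≤ φ := by
    obtain ⟨z, hz⟩ := Finset.card_pos.1 (by lia : 0 < Z.card)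
    linarith [(hZ hz).1, (hZ hz).2]
  refine ⟨fun hs0 => ?_, hzero s⟩
  rcases le_total s c with hleft | hleft
  · exact mem_of_const_add_oddTrig_eq_zero (x := c + φ - π) hP hP0 hcard
      (hZ.trans (Set.Icc_subset_Icc (by linarith) (by linarith))) hzero
      ⟨hs.1, by linarith⟩ hs0
  rcases le_total s (c + π) with hright | hright
  · exact mem_of_const_add_oddTrig_eq_zero hP hP0 hcard
      (hZ.trans (Set.Icc_subset_Icc le_rfl (by linarith))) hzero ⟨hleft, hright⟩ hs0
  · exact absurd hs0 (const_add_oddTrig_ne_zero_of_opposite hP hP0 hcard hZ hφ hzero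
      ⟨hright, by linarith [hs.2]⟩)

end ZeroSet

section RakedTrig

variable {k : ℕ} {a b : Fin k → ℝ}

/-- The polynomial `∑ (bⱼ - i aⱼ) Xʲ` of complex coefficients of a raked trigonometric
polynomial: `oddTrig` sends it to `∑ aⱼ sin ((2j+1)t) + ∑ bⱼ cos ((2j+1)t)`. -/
noncomputable def rakedPoly (a b : Fin k → ℝ) : ℂ[X] :=
  ∑ j : Fin k, monomial (j : ℕ) (b j - a j * I : ℂ)

lemma rakedTrig_eq_const_add_oddTrig (c : ℝ) (a b : Fin k → ℝ) (t : ℝ) :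
    rakedTrig k c a b t = c + oddTrig (rakedPoly a b) t := by
  have hterm (j : Fin k) : (Complex.exp (t * I) *
      ((b j - a j * I) * (Complex.exp (t * I) ^ 2) ^ (j : ℕ))).re =
      a j * Real.sin ((2 * (j : ℕ) + 1) * t) + b j * Real.cos ((2 * (j : ℕ) + 1) * t) := by
    have hexp : Complex.exp (t * I) * (Complex.exp (t * I) ^ 2) ^ (j : ℕ) =
        Complex.exp (((2 * (j : ℕ) + 1) * t : ℝ) * I) := by
      rw [← pow_mul, ← pow_succ', ← Complex.exp_nat_mul]
      push_cast
      ring_nf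
    rw [mul_left_comm, hexp, Complex.mul_re, Complex.exp_ofReal_mul_I_re,
      Complex.exp_ofReal_mul_I_im]
    simp [add_comm]
  simp only [rakedTrig, oddTrig, rakedPoly, eval_finsetSum, eval_monomial, Finset.mul_sum,
    Complex.re_sum, hterm, Finset.sum_add_distrib, add_assoc]

lemma natDegree_rakedPoly_le (a b : Fin k → ℝ) : (rakedPoly a b).natDegree ≤ k - 1 :=
  natDegree_sum_le_of_forall_le _ _ fun j _ => (natDegree_monomial_le _).trans (by lia)

lemma rakedPoly_ne_zero (hab : (a, b) ≠ 0) : rakedPoly a b ≠ 0 := by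
  contrapose! hab
  have hcoeff (j : Fin k) : (b j : ℂ) - a j * I = 0 := by
    simpa [rakedPoly, coeff_monomial, Fin.val_inj] using congrArg (coeff · (j : ℕ)) hab
  ext j
  · simpa using congrArg Complex.im (hcoeff j)
  · simpa using congrArg Complex.re (hcoeff j)

lemma exists_rakedTrig_eq_zero {Z : Finset ℝ} (hcard : Z.card ≤ 2 * k) (hne : Z.Nonempty) :
    ∃ (c : ℝ) (a b : Fin k → ℝ), (a, b) ≠ 0 ∧ ∀ z ∈ Z, rakedTrig k c a b z = 0 := by
  let evalOn : (ℝ × (Fin k → ℝ) × (Fin k → ℝ)) →ₗ[ℝ] (Z → ℝ) :=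
    { toFun := fun p z => rakedTrig k p.1 p.2.1 p.2.2 z
      map_add' := fun p q => by
        ext z
        simp only [rakedTrig, Prod.fst_add, Prod.snd_add, Pi.add_apply, add_mul,
          Finset.sum_add_distrib]
        ring
      map_smul' := fun r p => by
        ext z
        simp only [rakedTrig, Prod.smul_fst, Prod.smul_snd, Pi.smul_apply, smul_eq_mul, mul_assoc,
          ← Finset.mul_sum, RingHom.id_apply]
        ring }
  have hker : LinearMap.ker evalOn ≠ ⊥ := LinearMap.ker_ne_bot_of_finrank_lt (by
    simp only [Module.finrank_fintype_fun_eq_card, Fintype.card_coe, Module.finrank_prod,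
      Module.finrank_self, Fintype.card_fin]
    lia)
  obtain ⟨⟨c, a, b⟩, hp, hp0⟩ := Submodule.exists_mem_ne_zero_of_ne_bot hker
  have hzero (z) (hz : z ∈ Z) : rakedTrig k c a b z = 0 := congrFun hp ⟨z, hz⟩
  refine ⟨c, a, b, fun hab => hp0 ?_, hzero⟩
  obtain ⟨z, hz⟩ := hne
  obtain ⟨rfl, rfl⟩ := Prod.mk.inj hab
  have hc : c = 0 := by simpa [rakedTrig] using hzero z hz
  rw [hc, Prod.mk_zero_zero, Prod.mk_zero_zero]

lemma rakedTrig_periodic (c : ℝ) (a b : Fin k → ℝ) :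
    Function.Periodic (rakedTrig k c a b) (2 * π) := fun t => by
  simp only [rakedTrig_eq_const_add_oddTrig, oddTrig_periodic _ t]

lemma rakedTrig_congr {c s t : ℝ} (h : (s : AddCircle (2 * π)) = t) :
    rakedTrig k c a b s = rakedTrig k c a b t := by
  rw [← (rakedTrig_periodic c a b).lift_coe, h, (rakedTrig_periodic c a b).lift_coe]

end RakedTrig

/-- Proposition 6.1: there is `φ_k > 0` such that for any `2k` distinct points of `S¹`
lying on an arc of length at most `φ_k` there is a raked trigonometric polynomial whose
zero set on `S¹` is exactly this set of points. -/
theorem stmt_16 (k : ℕ) (hk : 0 < k) :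
    ∃ φ : ℝ, 0 < φ ∧
      ∀ (c : ℝ) (t : Fin (2 * k) → ℝ),
        (∀ i, t i ∈ Set.Icc c (c + φ)) →
        (Function.Injective fun i => ((t i : ℝ) : AddCircle (2 * π))) →
        ∃ (c₀ : ℝ) (a b : Fin k → ℝ),
          ∀ s : ℝ, rakedTrig k c₀ a b s = 0 ↔
            ∃ i, ((s : AddCircle (2 * π)) = ((t i : ℝ) : AddCircle (2 * π))) := by
  refine ⟨(1 / 2) ^ (2 * (k - 1) + 1), by positivity, fun c t ht hinj => ?_⟩
  set φ : ℝ := (1 / 2) ^ (2 * (k - 1) + 1)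
  set Z : Finset ℝ := Finset.univ.image t
  have ht_inj : Function.Injective t := .of_comp (f := ((↑) : ℝ → AddCircle (2 * π))) hinj
  have hcard : Z.card = 2 * k := by simp [Z, Finset.card_image_of_injective _ ht_inj]
  have hZ : ↑Z ⊆ Set.Icc c (c + φ) := by simpa [Z, Set.range_subset_iff] using ht
  obtain ⟨c₀, a, b, hab, hzero⟩ := exists_rakedTrig_eq_zero hcard.le (Finset.card_pos.1 (by lia))
  have hzeros {s} := const_add_oddTrig_eq_zero_iff_mem (s := s) (natDegree_rakedPoly_le a b)
    (rakedPoly_ne_zero hab) (by lia) hZ le_rfl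
    (by simpa only [rakedTrig_eq_const_add_oddTrig] using hzero)
  refine ⟨c₀, a, b, fun s => ⟨fun hs => ?_, ?_⟩⟩
  · have : Fact (0 < 2 * π) := ⟨two_pi_pos⟩
    obtain ⟨s', hs', hcoe⟩ : (s : AddCircle (2 * π)) ∈
        ((↑) : ℝ → AddCircle (2 * π)) '' Set.Ico (c + φ - π) (c + φ - π + 2 * π) := by
      simp only [AddCircle.coe_image_Ico_eq, Set.mem_univ]
    rw [← rakedTrig_congr hcoe, rakedTrig_eq_const_add_oddTrig, hzeros hs'] at hs
    obtain ⟨i, -, rfl⟩ := Finset.mem_image.1 hs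
    exact ⟨i, hcoe.symm⟩
  · rintro ⟨i, hi⟩
    exact (rakedTrig_congr hi).trans (hzero _ (Finset.mem_image_of_mem t (Finset.mem_univ i)))
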